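/- arXiv:2109.13692 — 8 statements merged into one kernel-verified Lean document; each statement's English description precedes it below -/
import Mathlib

section
/- Let q be a prime power, let r and δ be positive integers with δ ≥ 2, and let C be an [n,k,d]_q linear code with k ≥ 1 that is an (r,δ)-LRC. Then d ≤ n - k + 1 - (⌈k/r⌉ - 1)(δ - 1). -/
namespace LRCPaper

noncomputable section Defs

variable {F : Type} [Field F] [Fintype F] [DecidableEq F]

/-- The punctured code of `C` on the coordinate set `S`: delete all coordinates outside `S`. -/
def punctureCode {ι : Type} [Fintype ι] (C : Submodule F (ι → F)) (S : Finset ι) :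
    Submodule F ({ x // x ∈ S } → F) :=
  C.map (LinearMap.funLeft F F (fun j : { x // x ∈ S } => (j : ι)))

/-- Every nonzero codeword of `C` has Hamming weight at least `δ`
(i.e. the minimum distance of `C` is at least `δ`). -/
def minWtGe {ι : Type} [Fintype ι] (C : Submodule F (ι → F)) (δ : ℕ) : Prop :=
  ∀ c ∈ C, c ≠ 0 → δ ≤ hammingNorm c

/-- The minimum Hamming distance of the linear code `C` is exactly `d`. -/
def minDistIs {ι : Type} [Fintype ι] (C : Submodule F (ι → F)) (d : ℕ) : Prop :=
  (∃ c ∈ C, c ≠ 0 ∧ hammingNorm c = d) ∧ minWtGe C d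

/-- The `i`-th code symbol of `C` has `(r, δ)`-locality. -/
def symbolHasLocality {ι : Type} [Fintype ι] (C : Submodule F (ι → F)) (r δ : ℕ) (i : ι) :
    Prop :=
  ∃ S : Finset ι, i ∈ S ∧ S.card ≤ r + δ - 1 ∧ minWtGe (punctureCode C S) δ

/-- `C` is an `(r, δ)`-locally repairable code. -/
def IsLRC {ι : Type} [Fintype ι] (C : Submodule F (ι → F)) (r δ : ℕ) : Prop :=
  ∀ i : ι, symbolHasLocality C r δ i

/-- The right-hand side `n - k + 1 - (⌈k/r⌉ - 1)(δ - 1)` of the Singleton-type bound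
for `(r, δ)`-LRCs, as an integer. -/
def optBound (n k r δ : ℕ) : ℤ :=
  (n : ℤ) - (k : ℤ) + 1 - (⌈(k : ℚ) / (r : ℚ)⌉ - 1) * ((δ : ℤ) - 1)

/-- `C` is an optimal `(r, δ)`-LRC with parameters `[card ι, k, d]`. -/
def IsOptimalLRC {ι : Type} [Fintype ι] (C : Submodule F (ι → F)) (k d r δ : ℕ) : Prop :=
  IsLRC C r δ ∧ Module.finrank F ↥C = k ∧ minDistIs C d ∧
    (d : ℤ) = optBound (Fintype.card ι) k r δ

/-- `C` is an optimal `(r, δ)`-LRC (its minimum distance meets the Singleton-type bound). -/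
def IsOptimalLRCCode {ι : Type} [Fintype ι] (C : Submodule F (ι → F)) (r δ : ℕ) : Prop :=
  IsLRC C r δ ∧ ∃ d : ℕ, minDistIs C d ∧
    (d : ℤ) = optBound (Fintype.card ι) (Module.finrank F ↥C) r δ

/-- The linear map underlying the matrix-product construction: it sends
`(c_1, …, c_M)` to `(∑_ℓ c_ℓ a_{ℓ,1}, …, ∑_ℓ c_ℓ a_{ℓ,N})`. -/
def mpMap {ι : Type} [Fintype ι] {M N : ℕ} (A : Matrix (Fin M) (Fin N) F) :
    (Fin M → ι → F) →ₗ[F] (Fin N × ι → F) where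
  toFun c := fun p => ∑ ℓ : Fin M, c ℓ p.2 * A ℓ p.1
  map_add' x y := by
    funext p
    simp [add_mul, Finset.sum_add_distrib]
  map_smul' a x := by
    funext p
    simp [Finset.mul_sum, mul_assoc]

/-- The matrix-product code `(C_1, …, C_M) · A`, a linear code of length `N * card ι`
with coordinates indexed by `Fin N × ι`. -/
def matrixProductCode {ι : Type} [Fintype ι] {M N : ℕ}
    (Cs : Fin M → Submodule F (ι → F)) (A : Matrix (Fin M) (Fin N) F) :
    Submodule F (Fin N × ι → F) :=
  (Submodule.pi Set.univ Cs).map (mpMap A)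

/-- The linear code of length `N` generated by the first `i` rows of `A`. -/
def rowSpanCode {M N : ℕ} (A : Matrix (Fin M) (Fin N) F) (i : ℕ) :
    Submodule F (Fin N → F) :=
  Submodule.span F {w : Fin N → F | ∃ ℓ : Fin M, (ℓ : ℕ) < i ∧ w = A ℓ}

/-- `A` is nonsingular by columns (NSC): for every `i ≤ M`, every `i × i` submatrix
formed by choosing `i` columns of the first `i` rows of `A` is nonsingular. -/
def IsNSC {M N : ℕ} (A : Matrix (Fin M) (Fin N) F) : Prop :=
  ∀ (i : ℕ) (hi : i ≤ M) (f : Fin i → Fin N), StrictMono f →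
    (Matrix.of fun a b : Fin i => A (Fin.castLE hi a) (f b)).det ≠ 0

/-- Evaluation map underlying generalized Reed–Solomon codes:
`p ↦ (v_1 p(a_1), …, v_n p(a_n))`. -/
def grsMap {n : ℕ} (a v : Fin n → F) : Polynomial F →ₗ[F] (Fin n → F) where
  toFun p := fun i => v i * Polynomial.eval (a i) p
  map_add' p q := by funext i; simp [mul_add]
  map_smul' c p := by funext i; simp [mul_left_comm]

/-- The generalized Reed–Solomon code `GRS_k(a, v)`. -/
def GRSCode {n : ℕ} (k : ℕ) (a v : Fin n → F) : Submodule F (Fin n → F) :=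
  (Polynomial.degreeLT F k).map (grsMap a v)

/-- The set of indices of nonzero columns of `H`. -/
def colSupport {m n : ℕ} (H : Matrix (Fin m) (Fin n) F) : Finset (Fin n) :=
  Finset.univ.filter fun j => ∃ i, H i j ≠ 0

/-- Entry `(i, j)` (0-based) of the `2(δ-1) × (2m-1)` matrix `Ĥ`, built from the distinct
elements `α 0, …, α (m-1)` and nonzero scalars `lam 0, …, lam (m-1)`. -/
def hatEntry (δ m : ℕ) (α lam : ℕ → F) (i j : ℕ) : F :=
  if i < δ - 1 then (if j < m then lam j * α j ^ i else 0)
  else (if m - 1 ≤ j then lam (2 * m - 2 - j) * α (2 * m - 2 - j) ^ (i - (δ - 1)) else 0)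

/-- Entry `(i, j)` (0-based) of the `v(δ-1) × (vm-1)` block-diagonal matrix
`ℋ = H ⊕ ⋯ ⊕ H ⊕ Ĥ` (`v - 2` diagonal copies of `H` followed by `Ĥ`). -/
def calHEntry (δ m v : ℕ) (α lam : ℕ → F) (i j : ℕ) : F :=
  if i < (v - 2) * (δ - 1) then
    (if j < (v - 2) * m ∧ j / m = i / (δ - 1) then lam (j % m) * α (j % m) ^ (i % (δ - 1))
      else 0)
  else
    (if (v - 2) * m ≤ j then hatEntry δ m α lam (i - (v - 2) * (δ - 1)) (j - (v - 2) * m)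
      else 0)

/-- Entry `(i, j)` (0-based) of the `(v(δ-1)+τ) × (vm-1)` matrix `H̃`, obtained by appending
the row block `(A, …, A, Â)` below `ℋ`. -/
def tildeHEntry (δ m v : ℕ) (α lam : ℕ → F) (i j : ℕ) : F :=
  if i < v * (δ - 1) then calHEntry δ m v α lam i j
  else
    lam (if j < (v - 2) * m then j % m
          else (if j - (v - 2) * m < m then j - (v - 2) * m
                else 2 * m - 2 - (j - (v - 2) * m))) *
      α (if j < (v - 2) * m then j % m
          else (if j - (v - 2) * m < m then j - (v - 2) * m
                else 2 * m - 2 - (j - (v - 2) * m))) ^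
        ((δ - 1) + (i - v * (δ - 1)))

end Defs

lemma aux_singleton {F : Type} [Field F] [Fintype F] [DecidableEq F] {ι : Type} [Fintype ι]
    [DecidableEq ι] (V : Submodule F (ι → F)) (U : Finset ι) (δ : ℕ) (hδ : 1 ≤ δ)
    (hU : ∀ c ∈ V, ∀ i, i ∉ U → c i = 0) (hne : V ≠ ⊥) (hwt : minWtGe V δ) :
    Module.finrank F V + δ ≤ U.card + 1 := by
  have hsupp : ∀ c ∈ V, hammingNorm c ≤ U.card := by
    intro c hc
    unfold hammingNorm
    apply Finset.card_le_card
    intro i hi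
    by_contra h
    exact (Finset.mem_filter.1 hi).2 (hU c hc i h)
  obtain ⟨c, hc, hc0⟩ := Submodule.exists_mem_ne_zero_of_ne_bot hne
  have h1 := (hwt c hc hc0).trans (hsupp c hc)
  obtain ⟨W, hWU, hW⟩ := Finset.exists_subset_card_eq (s := U) (n := U.card - (δ - 1)) (by omega)
  let g : V →ₗ[F] ({x // x ∈ W} → F) :=
    (LinearMap.funLeft F F (fun j : {x // x ∈ W} => (j : ι))).domRestrict V
  have hg : Function.Injective g := by
    rw [← LinearMap.ker_eq_bot, LinearMap.ker_eq_bot']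
    rintro ⟨v, hv⟩ hgv
    by_contra hv0
    have hv0 : v ≠ 0 := fun h => hv0 (by ext1; exact h)
    have h2 := hwt v hv hv0
    have h3 : hammingNorm v ≤ (U \ W).card := by
      unfold hammingNorm
      apply Finset.card_le_card
      intro i hi
      have hi := (Finset.mem_filter.1 hi).2
      rw [Finset.mem_sdiff]
      refine ⟨?_, ?_⟩
      · by_contra h
        exact hi (hU v hv i h)
      · intro h
        exact hi (congrFun hgv ⟨i, h⟩)
    rw [Finset.card_sdiff_of_subset hWU] at h3
    omega
  have h4 := LinearMap.finrank_le_finrank_of_injective hg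
  rw [Module.finrank_fintype_fun_eq_card, Fintype.card_coe] at h4
  omega

/-- Codewords vanishing on `T`. -/
def vanish {F : Type} [Field F] {ι : Type} (C : Submodule F (ι → F)) (T : Finset ι) :
    Submodule F (ι → F) :=
  C ⊓ LinearMap.ker (LinearMap.funLeft F F (fun j : {x // x ∈ T} => (j : ι)))

lemma mem_vanish {F : Type} [Field F] {ι : Type} (C : Submodule F (ι → F)) (T : Finset ι)
    (c : ι → F) : c ∈ vanish C T ↔ c ∈ C ∧ ∀ i ∈ T, c i = 0 := by
  unfold vanish
  rw [Submodule.mem_inf, LinearMap.mem_ker, funext_iff]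
  simp [LinearMap.funLeft_apply]

lemma aux_step {F : Type} [Field F] [Fintype F] [DecidableEq F] {ι : Type} [Fintype ι]
    [DecidableEq ι] (C : Submodule F (ι → F)) (T S : Finset ι) (δ : ℕ) (hδ : 1 ≤ δ)
    (hS : minWtGe (punctureCode C S) δ) (c : ι → F) (hc : c ∈ vanish C T) (i : ι) (hi : i ∈ S)
    (hci : c i ≠ 0) :
    Module.finrank F (vanish C T) + δ ≤
      Module.finrank F (vanish C (T ∪ S)) + (S \ T).card + 1 := by
  let φ : (ι → F) →ₗ[F] ({x // x ∈ S} → F) :=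
    LinearMap.funLeft F F (fun j : {x // x ∈ S} => (j : ι))
  have h1 := aux_singleton ((vanish C T).map φ) (Finset.univ.filter fun j => (j : ι) ∉ T) δ hδ
    (by
      rintro _ ⟨v, hv, rfl⟩ j hj
      have hj : (j : ι) ∈ T := by simpa using hj
      exact ((mem_vanish C T v).1 hv).2 _ hj)
    (by
      intro h
      have : φ c ∈ (vanish C T).map φ := Submodule.mem_map_of_mem hc
      rw [h, Submodule.mem_bot] at this
      exact hci (congrFun this ⟨i, hi⟩))
    (by
      rintro _ ⟨v, hv, rfl⟩ h0
      exact hS _ (Submodule.mem_map_of_mem ((mem_vanish C T v).1 hv).1) h0)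
  have h2 := LinearMap.finrank_range_add_finrank_ker (φ.domRestrict (vanish C T))
  rw [LinearMap.range_domRestrict] at h2
  have h3 : (LinearMap.ker (φ.domRestrict (vanish C T))).map (vanish C T).subtype
      = vanish C (T ∪ S) := by
    ext v
    rw [mem_vanish]
    constructor
    · rintro ⟨⟨w, hw⟩, hk, rfl⟩
      have hw' := (mem_vanish C T w).1 hw
      refine ⟨hw'.1, fun j hj => ?_⟩
      rcases Finset.mem_union.1 hj with hj | hj
      · exact hw'.2 j hj
      · exact congrFun (LinearMap.mem_ker.1 hk) ⟨j, hj⟩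
    · rintro ⟨hv, h⟩
      refine ⟨⟨v, (mem_vanish C T v).2 ⟨hv, fun j hj => h j (Finset.mem_union_left _ hj)⟩⟩, ?_, rfl⟩
      refine LinearMap.mem_ker.2 ?_
      funext j
      exact h j (Finset.mem_union_right _ j.2)
  have h4 := Submodule.finrank_map_subtype_eq (vanish C T) (LinearMap.ker (φ.domRestrict (vanish C T)))
  rw [h3] at h4
  have h5 : (Finset.univ.filter fun j : {x // x ∈ S} => (j : ι) ∉ T).card ≤ (S \ T).card := by
    rw [← Finset.card_map (Function.Embedding.subtype _)]
    apply Finset.card_le_card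
    intro x hx
    simp at hx
    simp [hx]
  omega

lemma aux_greedy {F : Type} [Field F] [Fintype F] [DecidableEq F] {ι : Type} [Fintype ι]
    [DecidableEq ι] (C : Submodule F (ι → F)) (r δ : ℕ) (hδ : 1 ≤ δ) (hL : IsLRC C r δ) (m : ℕ) :
    m * r < Module.finrank F C → ∃ T : Finset ι,
      Module.finrank F C ≤ Module.finrank F (vanish C T) + m * r ∧
      Module.finrank F C + m * (δ - 1) ≤ T.card + Module.finrank F (vanish C T) := by
  induction m with
  | zero =>
    intro _
    have : vanish C ∅ = C := by ext v; simp [mem_vanish]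
    exact ⟨∅, by rw [this]; simp⟩
  | succ m ih =>
    intro hm
    rw [Nat.succ_mul] at hm
    obtain ⟨T, h1, h2⟩ := ih (by omega)
    have hne : vanish C T ≠ ⊥ := by
      intro h
      rw [h, finrank_bot] at h1
      omega
    obtain ⟨c, hc, hc0⟩ := Submodule.exists_mem_ne_zero_of_ne_bot hne
    obtain ⟨i, hi⟩ := Function.ne_iff.1 hc0
    obtain ⟨S, hiS, hcard, hS⟩ := hL i
    have h3 := aux_step C T S δ hδ hS c hc i hiS hi
    have h4 : (S \ T).card ≤ S.card := Finset.card_le_card Finset.sdiff_subset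
    have h5 : (T ∪ S).card = T.card + (S \ T).card := by
      rw [← Finset.union_sdiff_self_eq_union, Finset.card_union_of_disjoint Finset.disjoint_sdiff]
    refine ⟨T ∪ S, ?_, ?_⟩
    · rw [Nat.succ_mul]; omega
    · rw [Nat.succ_mul]; omega

/-- Singleton-type bound for `(r,δ)`-LRCs: if `C` is an `[n,k,d]_q`
`(r,δ)`-LRC with `k ≥ 1`, `r ≥ 1`, `δ ≥ 2`, then
`d ≤ n - k + 1 - (⌈k/r⌉ - 1)(δ - 1)`. -/
theorem singleton_type_bound
    (q : ℕ) (hq : IsPrimePow q)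
    (F : Type) [Field F] [Fintype F] [DecidableEq F] (hF : Fintype.card F = q)
    (n k d r δ : ℕ) (hr : 1 ≤ r) (hδ : 2 ≤ δ) (hk : 1 ≤ k)
    (C : Submodule F (Fin n → F))
    (hdim : Module.finrank F ↥C = k) (hdist : minDistIs C d)
    (hLRC : IsLRC C r δ) :
    (d : ℤ) ≤ optBound n k r δ := by
  classical
  obtain ⟨⟨c, hc, hc0, hcd⟩, hwt⟩ := hdist
  have hd : 1 ≤ d := by
    rw [← hcd]
    exact hammingNorm_pos_iff.2 hc0
  have hr' : (0 : ℚ) < r := by exact_mod_cast hr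
  have hk' : (0 : ℚ) < k := by exact_mod_cast hk
  have hpos : 0 < ⌈(k : ℚ) / (r : ℚ)⌉ := Int.ceil_pos.2 (by positivity)
  obtain ⟨m, hm⟩ := Int.eq_ofNat_of_zero_le (a := ⌈(k : ℚ) / (r : ℚ)⌉ - 1) (by omega)
  have hmk : m * r < k := by
    have h := Int.ceil_lt_add_one ((k : ℚ) / (r : ℚ))
    have h' : (⌈(k : ℚ) / (r : ℚ)⌉ : ℚ) = m + 1 := by
      have : ⌈(k : ℚ) / (r : ℚ)⌉ = (m : ℤ) + 1 := by omega
      rw [this]; push_cast; rfl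
    rw [h'] at h
    have h2 : (m : ℚ) < k / r := by linarith
    rw [lt_div_iff₀ hr'] at h2
    exact_mod_cast h2
  obtain ⟨T, h1, h2⟩ := aux_greedy C r δ (by omega) hLRC m (by rw [hdim]; exact hmk)
  rw [hdim] at h1 h2
  have hne : vanish C T ≠ ⊥ := by
    intro h
    rw [h, finrank_bot] at h1
    omega
  have h3 := aux_singleton (vanish C T) Tᶜ d hd
    (fun v hv i hi => ((mem_vanish C T v).1 hv).2 i (by simpa using hi)) hne
    (fun v hv h0 => hwt v ((mem_vanish C T v).1 hv).1 h0)
  have h4 := Finset.card_add_card_compl T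
  rw [Fintype.card_fin] at h4
  have h5 : d + k + m * (δ - 1) ≤ n + 1 := by omega
  unfold optBound
  rw [hm]
  zify [show 1 ≤ δ by omega] at h5
  linarith

end LRCPaper
end

section
/- Let q be a prime power, let C_i be an [n,k_i,d_i]_q linear code for each i ∈ {1,...,M}, and let A be a full-rank M×N matrix over F_q with M ≤ N. Then the matrix-product code (C_1,...,C_M)·A is a linear code of length Nn and dimension k_1 + ... + k_M, and its minimum distance d satisfies d ≥ min_{i∈{1,...,M}} d_i ρ_i, where ρ_i is the minimum distance of the linear code of length N over F_q generated by the first i rows of A. Moreover, if the codes are nested, i.e., C_M ⊆ ⋯ ⊆ C_1, then d = min_{i∈{1,...,M}} d_i ρ_i. -/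
namespace LRCPaper

section Helpers

variable {F : Type} [Field F] [Fintype F] [DecidableEq F]

lemma mp_linInd {M N : ℕ} (A : Matrix (Fin M) (Fin N) F) (hA : A.rank = M) :
    LinearIndependent F (fun ℓ : Fin M => A ℓ) := by
  rw [linearIndependent_iff_card_eq_finrank_span]
  have h := A.rank_eq_finrank_span_row
  rw [hA] at h
  rw [Fintype.card_fin]
  exact h

lemma mp_norm {N n : ℕ} (w : Fin N × Fin n → F) :
    hammingNorm w = ∑ x, hammingNorm (fun j => w (j, x)) := by
  simp only [hammingNorm, Finset.card_filter]
  rw [Fintype.sum_prod_type_right]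

lemma mp_coeff {M N : ℕ} (A : Matrix (Fin M) (Fin N) F) (i : ℕ) (w : Fin N → F)
    (hw : w ∈ rowSpanCode A i) :
    ∃ b : Fin M → F, (∀ ℓ : Fin M, i ≤ (ℓ : ℕ) → b ℓ = 0) ∧ w = ∑ ℓ, b ℓ • A ℓ := by
  induction hw using Submodule.span_induction with
  | mem x hx =>
    obtain ⟨ℓ, hℓ, rfl⟩ := hx
    refine ⟨Pi.single ℓ 1, ?_, ?_⟩
    · intro m hm
      apply Pi.single_eq_of_ne
      rintro rfl
      omega
    · rw [Finset.sum_eq_single ℓ]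
      · rw [Pi.single_eq_same, one_smul]
      · intro m _ hm
        rw [Pi.single_eq_of_ne hm, zero_smul]
      · intro h
        exact absurd (Finset.mem_univ ℓ) h
  | zero => exact ⟨0, by simp, by simp⟩
  | add x y _ _ hx hy =>
    obtain ⟨b, hb, rfl⟩ := hx
    obtain ⟨c, hc, rfl⟩ := hy
    refine ⟨b + c, fun ℓ h => by simp [hb ℓ h, hc ℓ h], ?_⟩
    simp [add_smul, Finset.sum_add_distrib]
  | smul a x _ hx =>
    obtain ⟨b, hb, rfl⟩ := hx
    refine ⟨a • b, fun ℓ h => by simp [hb ℓ h], ?_⟩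
    simp [Finset.smul_sum, smul_smul]

lemma mp_row {M N n : ℕ} (A : Matrix (Fin M) (Fin N) F) (c : Fin M → Fin n → F) (x : Fin n) :
    (fun j => mpMap A c (j, x)) = ∑ ℓ, c ℓ x • A ℓ := by
  funext j
  simp [mpMap]

lemma mp_inj {M N n : ℕ} (A : Matrix (Fin M) (Fin N) F) (hA : A.rank = M) :
    Function.Injective (mpMap (ι := Fin n) A) := by
  rw [← LinearMap.ker_eq_bot, LinearMap.ker_eq_bot']
  intro c hc
  funext ℓ x
  have h := mp_row A c x
  rw [hc] at h
  exact Fintype.linearIndependent_iff.1 (mp_linInd A hA) (fun ℓ => c ℓ x) h.symm ℓ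

lemma mp_lower {M N n : ℕ} (hM : 0 < M)
    (Cs : Fin M → Submodule F (Fin n → F)) (d : Fin M → ℕ)
    (hd : ∀ i, minDistIs (Cs i) (d i))
    (A : Matrix (Fin M) (Fin N) F) (hA : A.rank = M)
    (ρ : Fin M → ℕ)
    (hρ : ∀ i : Fin M, minDistIs (rowSpanCode A ((i : ℕ) + 1)) (ρ i)) :
    minWtGe (matrixProductCode Cs A)
      (Finset.univ.inf' ⟨⟨0, hM⟩, Finset.mem_univ _⟩ (fun i => d i * ρ i)) := by
  rintro w ⟨c, hc, rfl⟩ hw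
  have hc0 : c ≠ 0 := by rintro rfl; simp at hw
  have hne : (Finset.univ.filter fun i => c i ≠ 0).Nonempty := by
    obtain ⟨i, hi⟩ := Function.ne_iff.1 hc0
    exact ⟨i, by simpa using hi⟩
  obtain ⟨i, hi, hmax⟩ := Finset.exists_max_image _ id hne
  simp only [Finset.mem_filter, Finset.mem_univ, true_and, id] at hi hmax
  refine (Finset.inf'_le _ (Finset.mem_univ i)).trans ?_
  have hci : c i ∈ Cs i := hc i (Set.mem_univ i)
  have h1 : d i ≤ hammingNorm (c i) := (hd i).2 _ hci hi
  rw [mp_norm]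
  have h2 : ∀ x, (if c i x ≠ 0 then ρ i else 0) ≤ hammingNorm (fun j => mpMap A c (j, x)) := by
    intro x
    split_ifs with hx
    · apply (hρ i).2
      · rw [mp_row]
        refine Submodule.sum_mem _ fun ℓ _ => ?_
        by_cases hℓ : c ℓ = 0
        · simp [hℓ]
        · refine Submodule.smul_mem _ _ (Submodule.subset_span ⟨ℓ, ?_, rfl⟩)
          have h := hmax ℓ hℓ
          have h' : (ℓ : ℕ) ≤ i := h
          omega
      · intro h0
        rw [mp_row] at h0
        exact hx (Fintype.linearIndependent_iff.1 (mp_linInd A hA) (fun ℓ => c ℓ x) h0 i)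
    · exact Nat.zero_le _
  refine le_trans ?_ (Finset.sum_le_sum fun x _ => h2 x)
  rw [← Finset.sum_filter, Finset.sum_const, smul_eq_mul]
  exact Nat.mul_le_mul_right _ h1

lemma mp_finrank {M N n : ℕ} (Cs : Fin M → Submodule F (Fin n → F))
    (A : Matrix (Fin M) (Fin N) F) (hA : A.rank = M) :
    Module.finrank F ↥(matrixProductCode Cs A) = ∑ i, Module.finrank F ↥(Cs i) := by
  let g : ((i : Fin M) → Cs i) →ₗ[F] (Fin M → Fin n → F) :=
    LinearMap.pi fun i => (Cs i).subtype ∘ₗ LinearMap.proj i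
  have hg : Function.Injective g := by
    intro a b h
    funext i
    exact Subtype.ext (congrFun h i)
  have hr : LinearMap.range (mpMap A ∘ₗ g) = matrixProductCode Cs A := by
    rw [LinearMap.range_comp, matrixProductCode]
    congr 1
    ext c
    constructor
    · rintro ⟨a, rfl⟩ i _
      exact (a i).2
    · intro h
      exact ⟨fun i => ⟨c i, h i (Set.mem_univ i)⟩, rfl⟩
  rw [← hr, LinearMap.finrank_range_of_inj, Module.finrank_pi_fintype]
  exact (mp_inj A hA).comp hg

end Helpers

/-- parameters of matrix-product codes: if each `C_i` is an
`[n, k_i, d_i]_q` code and `A` is a full-rank `M × N` matrix with `M ≤ N`, then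
`(C_1, …, C_M) · A` has dimension `k_1 + ⋯ + k_M` and minimum distance
`d ≥ min_i d_i ρ_i`, with equality when the codes are nested. -/
theorem matrixProduct_params
    (q : ℕ) (hq : IsPrimePow q)
    (F : Type) [Field F] [Fintype F] [DecidableEq F] (hF : Fintype.card F = q)
    (n M N : ℕ) (hM : 0 < M) (hMN : M ≤ N)
    (Cs : Fin M → Submodule F (Fin n → F)) (k d : Fin M → ℕ)
    (hk : ∀ i, Module.finrank F ↥(Cs i) = k i)
    (hd : ∀ i, minDistIs (Cs i) (d i))
    (A : Matrix (Fin M) (Fin N) F) (hA : A.rank = M)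
    (ρ : Fin M → ℕ)
    (hρ : ∀ i : Fin M, minDistIs (rowSpanCode A ((i : ℕ) + 1)) (ρ i)) :
    Module.finrank F ↥(matrixProductCode Cs A) = ∑ i, k i ∧
      (∀ D : ℕ, minDistIs (matrixProductCode Cs A) D →
        Finset.univ.inf' ⟨⟨0, hM⟩, Finset.mem_univ _⟩ (fun i => d i * ρ i) ≤ D) ∧
      ((∀ i j : Fin M, i ≤ j → Cs j ≤ Cs i) →
        minDistIs (matrixProductCode Cs A)
          (Finset.univ.inf' ⟨⟨0, hM⟩, Finset.mem_univ _⟩ (fun i => d i * ρ i))) := by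
  have hlow := mp_lower hM Cs d hd A hA ρ hρ
  refine ⟨?_, ?_, ?_⟩
  · rw [mp_finrank Cs A hA]
    exact Finset.sum_congr rfl fun i _ => hk i
  · rintro D ⟨⟨c, hc, hc0, rfl⟩, _⟩
    exact hlow c hc hc0
  · intro hnest
    refine ⟨?_, hlow⟩
    obtain ⟨i, _, hi⟩ := Finset.exists_mem_eq_inf' (s := Finset.univ)
      ⟨⟨0, hM⟩, Finset.mem_univ _⟩ (fun i : Fin M => d i * ρ i)
    rw [hi]
    obtain ⟨⟨c, hc, hc0, hcd⟩, -⟩ := hd i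
    obtain ⟨⟨w, hw, hw0, hwd⟩, -⟩ := hρ i
    obtain ⟨b, hb, hwb⟩ := mp_coeff A _ w hw
    have hval : ∀ x, (fun j => mpMap A (fun ℓ => b ℓ • c) (j, x)) = c x • w := by
      intro x
      rw [mp_row, hwb, Finset.smul_sum]
      refine Finset.sum_congr rfl fun ℓ _ => ?_
      rw [smul_smul, Pi.smul_apply, smul_eq_mul, mul_comm]
    refine ⟨mpMap A (fun ℓ => b ℓ • c), ⟨_, ?_, rfl⟩, ?_, ?_⟩
    · intro ℓ _
      by_cases h : (i : ℕ) + 1 ≤ ℓ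
      · simp [hb ℓ h]
      · have hle : ℓ ≤ i := by
          rw [Fin.le_def]
          omega
        exact Submodule.smul_mem _ _ (hnest ℓ i hle hc)
    · intro h0
      obtain ⟨x, hx⟩ := Function.ne_iff.1 hc0
      have h := hval x
      rw [h0] at h
      exact (smul_ne_zero (by simpa using hx) hw0) h.symm
    · rw [mp_norm, ← hcd, ← hwd]
      have h2 : ∀ x, hammingNorm (fun j => mpMap A (fun ℓ => b ℓ • c) (j, x)) =
          if c x ≠ 0 then hammingNorm w else 0 := by
        intro x
        rw [hval x]
        split_ifs with hx
        · exact hammingNorm_smul (fun _ => IsSMulRegular.of_ne_zero hx) w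
        · have hx' : c x = 0 := not_not.1 hx
          rw [hx', zero_smul, hammingNorm_zero]
      rw [Finset.sum_congr rfl fun x _ => h2 x, ← Finset.sum_filter, Finset.sum_const,
        smul_eq_mul]
      rfl

end LRCPaper
end

section
/- Let q be a prime power, let r, δ be positive integers with δ > 1, and let C_1,...,C_M be linear codes of length n over F_q with C_M ⊆ ⋯ ⊆ C_1. Let A be a full-rank M×N matrix over F_q with M ≤ N and let C = (C_1,...,C_M)·A be the matrix-product code. If C_1 is an (r,δ)-LRC, then C is an (r,δ)-LRC. -/
namespace LRCPaper

/-- Lemma 2: if `C_M ⊆ ⋯ ⊆ C_1`, `A` is a full-rank `M × N` matrix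
with `M ≤ N`, and `C_1` is an `(r,δ)`-LRC, then `(C_1, …, C_M) · A` is an `(r,δ)`-LRC. -/
theorem matrixProduct_isLRC
    (q : ℕ) (hq : IsPrimePow q)
    (F : Type) [Field F] [Fintype F] [DecidableEq F] (hF : Fintype.card F = q)
    (n M N r δ : ℕ) (hr : 0 < r) (hδ : 1 < δ) (hM : 0 < M) (hMN : M ≤ N)
    (Cs : Fin M → Submodule F (Fin n → F))
    (hnested : ∀ i j : Fin M, i ≤ j → Cs j ≤ Cs i)
    (A : Matrix (Fin M) (Fin N) F) (hA : A.rank = M)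
    (hC1 : IsLRC (Cs ⟨0, hM⟩) r δ) :
    IsLRC (matrixProductCode Cs A) r δ := by
  classical
  rintro ⟨j, i⟩
  obtain ⟨S, hiS, hcard, hS⟩ := hC1 i
  refine ⟨S.map ⟨fun x => (j, x), fun a b h => (Prod.mk.inj h).2⟩, ?_, ?_, ?_⟩
  · exact Finset.mem_map.2 ⟨i, hiS, rfl⟩
  · simpa using hcard
  · rintro _ ⟨_, ⟨c, hc, rfl⟩, rfl⟩ hne
    have hmem : (fun x => ∑ l : Fin M, c l x * A l j) ∈ Cs ⟨0, hM⟩ := by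
      have h : (fun x => ∑ l : Fin M, c l x * A l j) = ∑ l : Fin M, A l j • c l := by
        funext x
        simp [Finset.sum_apply, mul_comm]
      rw [h]
      refine Submodule.sum_mem _ fun l _ => Submodule.smul_mem _ _ ?_
      exact hnested ⟨0, hM⟩ l (Fin.mk_le_of_le_val (Nat.zero_le _)) (hc l (Set.mem_univ l))
    have key := hS _ ⟨_, hmem, rfl⟩ ?_
    · refine key.trans ?_
      unfold hammingNorm
      refine Finset.card_le_card_of_injOn
        (fun x => ⟨(j, x.1), Finset.mem_map.2 ⟨x.1, x.2, rfl⟩⟩) ?_ ?_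
      · intro x hx
        exact Finset.mem_filter.2 ⟨Finset.mem_univ _, (Finset.mem_filter.1 hx).2⟩
      · intro x _ y _ h
        exact Subtype.ext (Prod.mk.inj (Subtype.mk.inj h)).2
    · intro h0
      apply hne
      funext ⟨p, hp⟩
      obtain ⟨x, hx, rfl⟩ := Finset.mem_map.1 hp
      exact congrFun h0 ⟨x, hx⟩

end LRCPaper
end

section
/- Let q be a prime power and let r, δ, M, N be positive integers with δ > 1 and q ≥ N > M > 1. Let C_1 = ⋯ = C_{M-1} be [r+δ-1, r, δ]_q MDS codes, let g be a nonnegative integer with g < r, and let C_M be an [r+δ-1, r-g, δ+g]_q MDS code. Let C = (C_1,...,C_M)·A be the matrix-product code, where A is an M×N NSC matrix over F_q. If C_M ⊆ C_1, 0 ≤ g ≤ δ/(N-M+1), and (N-M)(g-r+1) = ⌊g/r⌋(δ-1), then C is an optimal (r,δ)-LRC with parameters [N(r+δ-1), Mr-g, (N-M+1)(δ+g)]_q. -/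
namespace LRCPaper

theorem nsc_row_weight {F : Type} [Field F] [DecidableEq F] {M N : ℕ}
    (A : Matrix (Fin M) (Fin N) F) (hA : IsNSC A) (v : Fin M → F) (i : Fin M)
    (hv : v i ≠ 0) (hz : ∀ l, i < l → v l = 0) :
    N - (i : ℕ) ≤ (Finset.univ.filter fun j : Fin N => ∑ l, v l * A l j ≠ 0).card := by
  by_contra hcon
  push Not at hcon
  have hsum := Finset.card_filter_add_card_filter_not (s := (Finset.univ : Finset (Fin N)))
    (fun j : Fin N => ∑ l, v l * A l j ≠ 0)
  rw [Finset.card_univ, Fintype.card_fin] at hsum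
  have hZ : (i : ℕ) + 1 ≤ (Finset.univ.filter fun j : Fin N => ¬ ∑ l, v l * A l j ≠ 0).card := by
    omega
  obtain ⟨T, hT, hTc⟩ := Finset.exists_subset_card_eq hZ
  have hi : (i : ℕ) + 1 ≤ M := i.2
  have hdet := hA ((i : ℕ) + 1) hi (T.orderEmbOfFin hTc) (T.orderEmbOfFin hTc).strictMono
  have h0 : Matrix.vecMul (fun a => v (Fin.castLE hi a))
      (Matrix.of fun a b : Fin ((i : ℕ) + 1) => A (Fin.castLE hi a) (T.orderEmbOfFin hTc b)) = 0 := by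
    funext b
    have hb := hT (T.orderEmbOfFin_mem hTc b)
    simp only [Finset.mem_filter, Finset.mem_univ, true_and, not_not] at hb
    simp only [Matrix.vecMul, dotProduct, Matrix.of_apply, Pi.zero_apply]
    rw [← hb]
    apply Finset.sum_of_injOn (Fin.castLE hi)
    · intro x _ y _ h
      exact Fin.castLE_injective hi h
    · intro x _; simp
    · intro l _ hl
      rw [hz l, zero_mul]
      by_contra hle
      apply hl
      refine ⟨⟨l, ?_⟩, by simp, ?_⟩
      · have : (l : ℕ) ≤ i := not_lt.mp hle
        omega
      · ext; rfl
    · intro x _; rfl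
  have := Matrix.eq_zero_of_vecMul_eq_zero hdet h0
  have h2 := congrFun this ⟨i, Nat.lt_succ_self _⟩
  exact hv h2

theorem mp_weight {F : Type} [Field F] [Fintype F] [DecidableEq F] {ι : Type} [Fintype ι] {M N : ℕ}
    (A : Matrix (Fin M) (Fin N) F) (hA : IsNSC A) (c : Fin M → ι → F) (i : Fin M)
    (hz : ∀ l, i < l → c l = 0) :
    (N - (i : ℕ)) * hammingNorm (c i) ≤ hammingNorm (mpMap A c) := by
  classical
  have h1 : hammingNorm (mpMap A c) =
      ∑ x : ι, (Finset.univ.filter fun j : Fin N => ∑ l, c l x * A l j ≠ 0).card := by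
    unfold hammingNorm
    rw [Finset.card_eq_sum_card_fiberwise (f := Prod.snd) (t := Finset.univ)
      (by intro x _; simp)]
    apply Finset.sum_congr rfl
    intro x _
    symm
    apply Finset.card_bij (fun j _ => (j, x))
    · intro j hj
      have hj' := (Finset.mem_filter.mp hj).2
      exact Finset.mem_filter.mpr ⟨Finset.mem_filter.mpr ⟨Finset.mem_univ _, hj'⟩, rfl⟩
    · intro a _ b _ h
      exact (Prod.ext_iff.mp h).1
    · rintro ⟨j, y⟩ hb
      simp only [Finset.mem_filter, Finset.mem_univ, true_and] at hb
      obtain ⟨hb, rfl⟩ := hb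
      exact ⟨j, by simpa [mpMap] using hb, rfl⟩
  rw [h1]
  unfold hammingNorm
  rw [mul_comm, ← smul_eq_mul]
  calc _ ≤ ∑ x ∈ Finset.univ.filter (fun x => c i x ≠ 0),
        (Finset.univ.filter fun j : Fin N => ∑ l, c l x * A l j ≠ 0).card := by
        apply Finset.card_nsmul_le_sum
        intro x hx
        apply nsc_row_weight A hA (fun l => c l x) i
        · simpa using hx
        · intro l hl
          simp [hz l hl]
    _ ≤ _ := Finset.sum_le_sum_of_subset (Finset.subset_univ _)

theorem exists_top {F : Type} [Field F] {ι : Type} {M : ℕ} (c : Fin M → ι → F) (hc : c ≠ 0) :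
    ∃ i, c i ≠ 0 ∧ ∀ l, i < l → c l = 0 := by
  classical
  have hne : (Finset.univ.filter fun i => c i ≠ 0).Nonempty := by
    obtain ⟨i, hi⟩ := Function.ne_iff.mp hc
    exact ⟨i, by simpa using hi⟩
  refine ⟨_, (Finset.mem_filter.mp (Finset.max'_mem _ hne)).2, ?_⟩
  intro l hl
  by_contra h
  have := Finset.le_max' (Finset.univ.filter fun i => c i ≠ 0) l (by simpa using h)
  exact absurd hl (not_lt.mpr this)

theorem mp_ker {F : Type} [Field F] [Fintype F] [DecidableEq F] {ι : Type} [Fintype ι] {M N : ℕ}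
    (A : Matrix (Fin M) (Fin N) F) (hA : IsNSC A) (hMN : M ≤ N) :
    Function.Injective (mpMap (ι := ι) A) := by
  rw [injective_iff_map_eq_zero]
  intro c h
  by_contra hc
  obtain ⟨i, hi, hz⟩ := exists_top c hc
  have h1 := mp_weight A hA c i hz
  rw [h, hammingNorm_zero] at h1
  have h2 := hammingNorm_pos_iff.mpr hi
  have h3 : 0 < N - (i : ℕ) := by have := i.2; omega
  have := Nat.mul_pos h3 h2
  omega

theorem finrank_pi_sub {F : Type} [Field F] [Fintype F] {ι : Type} [Fintype ι] {M : ℕ}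
    (Cs : Fin M → Submodule F (ι → F)) :
    Module.finrank F ↥(Submodule.pi Set.univ Cs) = ∑ i, Module.finrank F ↥(Cs i) := by
  rw [← Module.finrank_pi_fintype]
  refine LinearEquiv.finrank_eq
    { toFun := fun c i => ⟨c.1 i, c.2 i (Set.mem_univ i)⟩
      invFun := fun c => ⟨fun i => (c i).1, fun i _ => (c i).2⟩
      map_add' := fun _ _ => rfl
      map_smul' := fun _ _ => rfl
      left_inv := fun _ => rfl
      right_inv := fun _ => rfl }

theorem exists_comb {F : Type} [Field F] {M N : ℕ} (A : Matrix (Fin M) (Fin N) F)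
    (hM : 0 < M) (hMN : M ≤ N) :
    ∃ u : Fin M → F, u ≠ 0 ∧ ∀ j : Fin N, (j : ℕ) < M - 1 → ∑ l, u l * A l j = 0 := by
  let B : Matrix (Fin M) (Fin (M - 1)) F := fun l j => A l ⟨j, by have := j.2; omega⟩
  have hker : LinearMap.ker B.vecMulLinear ≠ ⊥ := by
    apply LinearMap.ker_ne_bot_of_finrank_lt
    simp; omega
  obtain ⟨u, hu, hne⟩ := (Submodule.ne_bot_iff _).mp hker
  refine ⟨u, hne, fun j hj => ?_⟩
  have := congrFun (LinearMap.mem_ker.mp hu) ⟨j, hj⟩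
  exact this

/-- Lemma `lemd`: the matrix-product code of the nested MDS codes
`C_1 = ⋯ = C_{M-1}` (parameters `[r+δ-1, r, δ]_q`) and `C_M` (parameters
`[r+δ-1, r-g, δ+g]_q`) by an `M × N` NSC matrix is an optimal `(r,δ)`-LRC with
parameters `[N(r+δ-1), Mr-g, (N-M+1)(δ+g)]_q`, provided `C_M ⊆ C_1`,
`0 ≤ g ≤ δ/(N-M+1)` and `(N-M)(g-r+1) = ⌊g/r⌋(δ-1)`. -/
theorem matrixProduct_optimal_of_conditions
    (q : ℕ) (hq : IsPrimePow q)
    (F : Type) [Field F] [Fintype F] [DecidableEq F] (hF : Fintype.card F = q)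
    (r δ M N g : ℕ) (hδ : 1 < δ) (hr : 0 < r) (hM : 1 < M) (hMN : M < N) (hNq : N ≤ q)
    (hgr : g < r)
    (C1 CM : Submodule F (Fin (r + δ - 1) → F))
    (hC1k : Module.finrank F ↥C1 = r) (hC1d : minDistIs C1 δ)
    (hCMk : Module.finrank F ↥CM = r - g) (hCMd : minDistIs CM (δ + g))
    (A : Matrix (Fin M) (Fin N) F) (hA : IsNSC A)
    (hsub : CM ≤ C1)
    (hgδ : (g : ℚ) ≤ (δ : ℚ) / ((N : ℚ) - (M : ℚ) + 1))
    (heq : ((N : ℤ) - (M : ℤ)) * ((g : ℤ) - (r : ℤ) + 1)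
        = ((g / r : ℕ) : ℤ) * ((δ : ℤ) - 1)) :
    IsOptimalLRC
      (matrixProductCode (fun i : Fin M => if (i : ℕ) < M - 1 then C1 else CM) A)
      (M * r - g) ((N - M + 1) * (δ + g)) r δ := by
  classical
  have hgr0 : g / r = 0 := Nat.div_eq_of_lt hgr
  have hrg : r = g + 1 := by
    rw [hgr0] at heq
    simp only [Nat.cast_zero, zero_mul, mul_eq_zero] at heq
    omega
  have hMN' : M ≤ N := hMN.le
  have hgN : g * (N - M + 1) ≤ δ := by
    have hp : (0 : ℚ) < (N : ℚ) - M + 1 := by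
      have : (M : ℚ) ≤ N := by exact_mod_cast hMN'
      linarith
    rw [le_div_iff₀ hp] at hgδ
    have : ((g * (N - M + 1) : ℕ) : ℚ) ≤ (δ : ℚ) := by
      push_cast [Nat.cast_sub hMN']
      exact hgδ
    exact_mod_cast this
  have hin : ∀ c, c ∈ Submodule.pi Set.univ
      (fun i : Fin M => if (i : ℕ) < M - 1 then C1 else CM) → ∀ i, c i ∈ C1 := by
    intro c hc i
    have := hc i (Set.mem_univ i)
    simp only at this
    split_ifs at this with h
    · exact this
    · exact hsub this
  have hlow : minWtGe (matrixProductCode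
      (fun i : Fin M => if (i : ℕ) < M - 1 then C1 else CM) A) ((N - M + 1) * (δ + g)) := by
    rintro w ⟨c, hc, rfl⟩ hne
    have hc0 : c ≠ 0 := by
      rintro rfl
      exact hne (map_zero _)
    obtain ⟨i, hi, hz⟩ := exists_top c hc0
    refine le_trans ?_ (mp_weight A hA c i hz)
    have hm := hc i (Set.mem_univ i)
    simp only at hm
    have hiM := i.2
    split_ifs at hm with h
    · have h1 := hC1d.2 _ hm hi
      calc (N - M + 1) * (δ + g) ≤ (N - M + 2) * δ := by nlinarith
        _ ≤ _ := Nat.mul_le_mul (by omega) h1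
    · have h1 := hCMd.2 _ hm hi
      exact Nat.mul_le_mul (by omega) h1
  refine ⟨?_, ?_, ⟨?_, hlow⟩, ?_⟩
  · rintro ⟨j, x⟩
    refine ⟨Finset.univ.image (fun y => (j, y)), by simp, ?_, ?_⟩
    · refine Finset.card_image_le.trans (by simp)
    · rintro w ⟨w', ⟨c, hc, rfl⟩, rfl⟩ hne
      set e : Fin N × Fin (r + δ - 1) → F := mpMap A c with he
      let d : Fin (r + δ - 1) → F := fun y => e (j, y)
      have hd : d ∈ C1 := by
        have : d = ∑ l, A l j • c l := by
          funext y
          simp [d, he, mpMap, mul_comm]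
        rw [this]
        exact Submodule.sum_mem _ fun l _ => Submodule.smul_mem _ _ (hin c hc l)
      have hd0 : d ≠ 0 := by
        intro h0
        apply hne
        funext p
        obtain ⟨p, hp⟩ := p
        obtain ⟨y, _, rfl⟩ := Finset.mem_image.mp hp
        exact congrFun h0 y
      refine (hC1d.2 d hd hd0).trans ?_
      unfold hammingNorm
      refine Finset.card_le_card_of_injOn
        (fun y => ⟨(j, y), Finset.mem_image_of_mem _ (Finset.mem_univ y)⟩) ?_ ?_
      · intro y hy
        have hy' := (Finset.mem_filter.mp hy).2
        exact Finset.mem_filter.mpr ⟨Finset.mem_univ _, hy'⟩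
      · intro a _ b _ h
        simpa using h
  · unfold matrixProductCode
    rw [← LinearEquiv.finrank_eq (Submodule.equivMapOfInjective (mpMap A) (mp_ker A hA hMN') _), finrank_pi_sub]
    obtain ⟨m, rfl⟩ : ∃ m, M = m + 1 := ⟨M - 1, by omega⟩
    rw [Fin.sum_univ_castSucc]
    have h1 : ∀ x : Fin m, Module.finrank F
        ↥(if ((x.castSucc : Fin (m + 1)) : ℕ) < m + 1 - 1 then C1 else CM) = r := by
      intro x
      rw [if_pos (by simp), hC1k]
    have h2 : Module.finrank F
        ↥(if ((Fin.last m : Fin (m + 1)) : ℕ) < m + 1 - 1 then C1 else CM) = r - g := by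
      rw [if_neg (by simp), hCMk]
    rw [h2, Finset.sum_congr rfl (fun x _ => h1 x)]
    simp only [Finset.sum_const, Finset.card_univ, Fintype.card_fin, smul_eq_mul]
    rw [Nat.add_mul, one_mul]
    omega
  · obtain ⟨c, hc, hc0, hcw⟩ := hCMd.1
    obtain ⟨u, hu0, hu⟩ := exists_comb A (by omega) hMN'
    have hmem : mpMap A (fun l => u l • c) ∈ matrixProductCode
        (fun i : Fin M => if (i : ℕ) < M - 1 then C1 else CM) A := by
      refine ⟨_, ?_, rfl⟩
      intro i _
      simp only
      split_ifs
      · exact Submodule.smul_mem _ _ (hsub hc)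
      · exact Submodule.smul_mem _ _ hc
    have hne : mpMap A (fun l => u l • c) ≠ 0 := by
      intro h
      have := mp_ker A hA hMN' (h.trans (map_zero _).symm)
      apply hu0
      funext l
      have h2 := congrFun this l
      simpa [hc0] using h2
    refine ⟨_, hmem, hne, le_antisymm ?_ (hlow _ hmem hne)⟩
    rw [← hcw]
    unfold hammingNorm
    have hcard : (Finset.univ.filter fun j : Fin N => ¬ (j : ℕ) < M - 1).card = N - M + 1 := by
      have h1 := Finset.card_filter_add_card_filter_not (s := (Finset.univ : Finset (Fin N)))
        (fun j : Fin N => (j : ℕ) < M - 1)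
      have h2 : (Finset.univ.filter fun j : Fin N => (j : ℕ) < M - 1).card = M - 1 := by
        rw [Fin.card_filter_val_lt]
        omega
      rw [Finset.card_univ, Fintype.card_fin] at h1
      omega
    rw [← hcard, ← Finset.card_product]
    apply Finset.card_le_card
    rintro ⟨j, y⟩ hp
    simp only [Finset.mem_filter, Finset.mem_univ, true_and] at hp
    have hform : mpMap A (fun l => u l • c) (j, y) = c y * ∑ l, u l * A l j := by
      simp only [mpMap, LinearMap.coe_mk, AddHom.coe_mk, Pi.smul_apply, smul_eq_mul, Finset.mul_sum]
      exact Finset.sum_congr rfl fun l _ => by ring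
    rw [hform] at hp
    simp only [Finset.mem_product, Finset.mem_filter, Finset.mem_univ, true_and]
    exact ⟨fun hj => hp (by rw [hu j hj, mul_zero]), left_ne_zero_of_mul hp⟩
  · unfold optBound
    have hle : g ≤ M * r := by nlinarith
    have hceil : ⌈((M * r - g : ℕ) : ℚ) / (r : ℚ)⌉ = (M : ℤ) := by
      have hrq : (0 : ℚ) < r := by exact_mod_cast hr
      have hgq : (g : ℚ) < r := by exact_mod_cast hgr
      have hg0 : (0 : ℚ) ≤ g := by positivity
      rw [Int.ceil_eq_iff, lt_div_iff₀ hrq, div_le_iff₀ hrq, Nat.cast_sub hle]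
      push_cast
      constructor <;> nlinarith
    rw [hceil]
    simp only [Fintype.card_prod, Fintype.card_fin]
    rw [Nat.cast_sub hle, hrg]
    have : g + 1 + δ - 1 = g + δ := by omega
    rw [this]
    push_cast [Nat.cast_sub hMN']
    ring


end LRCPaper
end

section
/- Let q be a prime power and let r, δ, w, N be positive integers with δ > 1 and q ≥ N > 1. Let s and i be integers with 0 ≤ s < r and 0 ≤ i ≤ δ, and set k = wr - s. Let C_1 = ⋯ = C_{N-1} be [n, k, δ]_q codes and let C_N be an [n, k-i, δ+i]_q code, and suppose C_1 and C_N are both optimal (r,δ)-LRCs with C_N ⊆ C_1. Let C = (C_1,...,C_N)·A be the matrix-product code, where A is an N×N NSC matrix over F_q. If Ns + i < r, then C is an optimal (r,δ)-LRC with parameters [Nn, Nk - i, δ + i]_q. -/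
namespace LRCPaper

section Helpers

set_option linter.unusedSectionVars false

variable {F : Type} [Field F] [Fintype F] [DecidableEq F]

theorem mp_adj {M n : ℕ} (A : Matrix (Fin (M+1)) (Fin (M+1)) F)
    (c : Fin (M+1) → Fin n → F) (l : Fin (M+1)) (i : Fin n) :
    ∑ j, mpMap A c (j, i) * A.adjugate j l = A.det * c l i := by
  have h := A.mul_adjugate
  have : ∀ m, ∑ j, A m j * A.adjugate j l = if m = l then A.det else 0 := by
    intro m
    have := congrFun (congrFun h m) l
    rw [Matrix.mul_apply] at this
    rw [this]
    simp [Matrix.one_apply]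
  simp only [mpMap, LinearMap.coe_mk, AddHom.coe_mk, Finset.sum_mul]
  rw [Finset.sum_comm]
  simp only [mul_assoc, ← Finset.mul_sum, this]
  simp [mul_comm]

theorem nsc_det {M : ℕ} {A : Matrix (Fin (M+1)) (Fin (M+1)) F} (hA : IsNSC A) :
    A.det ≠ 0 := hA (M+1) le_rfl id strictMono_id

theorem nsc_adj {M : ℕ} {A : Matrix (Fin (M+1)) (Fin (M+1)) F} (hA : IsNSC A)
    (j : Fin (M+1)) : A.adjugate j (Fin.last M) ≠ 0 := by
  rw [Matrix.adjugate_fin_succ_eq_det_submatrix]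
  refine mul_ne_zero (pow_ne_zero _ (by simp)) ?_
  have := hA M (Nat.le_succ M) j.succAbove (Fin.strictMono_succAbove j)
  rw [Fin.succAbove_last]
  exact this

theorem mp_injective {M n : ℕ} {A : Matrix (Fin (M+1)) (Fin (M+1)) F} (hA : IsNSC A) :
    Function.Injective (mpMap (ι := Fin n) A) := by
  intro c d h
  funext l i
  have h1 := mp_adj A c l i
  rw [h, mp_adj] at h1
  exact (mul_left_cancel₀ (nsc_det hA) h1).symm

theorem finrank_subpi {m n : ℕ} (Cs : Fin m → Submodule F (Fin n → F)) :
    Module.finrank F (Submodule.pi Set.univ Cs) = ∑ l, Module.finrank F (Cs l) := by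
  have e : (Submodule.pi Set.univ Cs) ≃ₗ[F] ((l : Fin m) → Cs l) :=
    { toFun := fun x l => ⟨x.1 l, x.2 l trivial⟩
      invFun := fun x => ⟨fun l => x l, fun l _ => (x l).2⟩
      map_add' := fun _ _ => rfl
      map_smul' := fun _ _ => rfl
      left_inv := fun _ => rfl
      right_inv := fun _ => rfl }
  rw [e.finrank_eq, Module.finrank_pi_fintype]

theorem block_mem {M N n : ℕ} (Cs : Fin M → Submodule F (Fin n → F))
    (C1 : Submodule F (Fin n → F)) (hC : ∀ l, Cs l ≤ C1)
    (A : Matrix (Fin M) (Fin N) F) (y : Fin N × Fin n → F) (hy : y ∈ matrixProductCode Cs A)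
    (j : Fin N) : (fun i => y (j, i)) ∈ C1 := by
  obtain ⟨c, hc, rfl⟩ := hy
  have : (fun i => mpMap A c (j, i)) = ∑ l, A l j • c l := by
    funext i
    simp [mpMap, mul_comm]
  rw [this]
  exact C1.sum_mem fun l _ => C1.smul_mem _ (hC l (hc l trivial))

theorem norm_blocks {N n : ℕ} (y : Fin N × Fin n → F) :
    hammingNorm y = ∑ j, hammingNorm (fun i => y (j, i)) := by
  simp only [hammingNorm, Finset.card_filter]
  rw [Fintype.sum_prod_type]

theorem block_locality {N n r δ : ℕ} {C1 : Submodule F (Fin n → F)} (h : IsLRC C1 r δ)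
    (C : Submodule F (Fin N × Fin n → F))
    (hC : ∀ y ∈ C, ∀ j, (fun i => y (j, i)) ∈ C1) : IsLRC C r δ := by
  rintro ⟨j, i⟩
  obtain ⟨S, hi, hS, hw⟩ := h i
  refine ⟨S.map ⟨fun i => (j, i), fun a b h => (Prod.mk.inj h).2⟩, Finset.mem_map.2 ⟨i, hi, rfl⟩,
    by simpa using hS, ?_⟩
  rintro _ ⟨y, hy, rfl⟩ hne
  have h1 := hw _ ⟨_, hC y hy j, rfl⟩ ?_
  · refine h1.trans ?_
    unfold hammingNorm
    refine Finset.card_le_card_of_injOn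
      (fun x => ⟨(j, x.1), Finset.mem_map.2 ⟨x.1, x.2, rfl⟩⟩) ?_ ?_
    · intro x hx
      exact Finset.mem_coe.2 (Finset.mem_filter.2 ⟨Finset.mem_univ _, (Finset.mem_filter.1 hx).2⟩)
    · intro a _ b _ hab
      exact Subtype.ext (Prod.mk.inj (Subtype.mk.inj hab)).2
  · intro h0
    apply hne
    funext ⟨x, hx⟩
    obtain ⟨x', hx', rfl⟩ := Finset.mem_map.1 hx
    exact congrFun h0 ⟨x', hx'⟩

theorem ceil_aux (w r s : ℕ) (hw : 0 < w) (hs : s < r) :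
    ⌈((w * r - s : ℕ) : ℚ) / (r : ℚ)⌉ = (w : ℤ) := by
  have h1 : s ≤ w * r := hs.le.trans (Nat.le_mul_of_pos_left r hw)
  have hr : (0 : ℚ) < r := by exact_mod_cast (Nat.zero_le s).trans_lt hs
  have hs' : (s : ℚ) < r := by exact_mod_cast hs
  have hs0 : (0 : ℚ) ≤ s := by positivity
  rw [Int.ceil_eq_iff]
  push_cast [Nat.cast_sub h1]
  constructor
  · rw [lt_div_iff₀ hr]; linarith
  · rw [div_le_iff₀ hr]; linarith

end Helpers

/-- Theorem 2: with `k = wr - s`, optimal `(r,δ)`-LRCs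
`C_1 = ⋯ = C_{N-1}` of parameters `[n, k, δ]_q` and `C_N ⊆ C_1` of parameters
`[n, k - t, δ + t]_q`, and an `N × N` NSC matrix `A`, if `Ns + t < r` then
`(C_1, …, C_N) · A` is an optimal `(r,δ)`-LRC with parameters `[Nn, Nk - t, δ + t]_q`. -/
theorem square_matrixProduct_optimal
    (q : ℕ) (hq : IsPrimePow q)
    (F : Type) [Field F] [Fintype F] [DecidableEq F] (hF : Fintype.card F = q)
    (n r δ w N s t : ℕ) (hδ : 1 < δ) (hr : 0 < r) (hw : 0 < w) (hN : 1 < N) (hNq : N ≤ q)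
    (hs : s < r) (ht : t ≤ δ)
    (C1 CN : Submodule F (Fin n → F)) (hsub : CN ≤ C1)
    (hC1 : IsOptimalLRC C1 (w * r - s) δ r δ)
    (hCN : IsOptimalLRC CN (w * r - s - t) (δ + t) r δ)
    (A : Matrix (Fin N) (Fin N) F) (hA : IsNSC A)
    (hcond : N * s + t < r) :
    IsOptimalLRC
      (matrixProductCode (fun i : Fin N => if (i : ℕ) < N - 1 then C1 else CN) A)
      (N * (w * r - s) - t) (δ + t) r δ := by
  obtain ⟨M, rfl⟩ : ∃ M, N = M + 1 := ⟨N - 1, by omega⟩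
  obtain ⟨hL1, hk1, ⟨-, hd1⟩, ho1⟩ := hC1
  obtain ⟨-, hkN, ⟨⟨x, hxC, hx0, hxw⟩, hdN⟩, -⟩ := hCN
  set Cs : Fin (M+1) → Submodule F (Fin n → F) :=
    fun i => if (i : ℕ) < M + 1 - 1 then C1 else CN with hCs
  have hCs1 : ∀ l, Cs l ≤ C1 := by
    intro l; simp only [hCs]; split_ifs
    · exact le_rfl
    · exact hsub
  have hCsN : ∀ l, CN ≤ Cs l := by
    intro l; simp only [hCs]; split_ifs
    · exact hsub
    · exact le_rfl
  have hlast : Cs (Fin.last M) = CN := by simp [hCs]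
  have hcast : ∀ l : Fin M, Cs l.castSucc = C1 := by intro l; simp [hCs]
  have hblk := block_mem Cs C1 hCs1 A
  have hwr : r ≤ w * r := Nat.le_mul_of_pos_left r hw
  have hsM : s ≤ (M + 1) * s := Nat.le_mul_of_pos_left s (by omega)
  refine ⟨block_locality hL1 _ hblk, ?_, ⟨?_, ?_⟩, ?_⟩
  · unfold matrixProductCode
    rw [(Submodule.equivMapOfInjective _ (mp_injective hA) _).finrank_eq.symm, finrank_subpi, Fin.sum_univ_castSucc]
    have e1 : ∀ l : Fin M, Module.finrank F (Cs l.castSucc) = w * r - s := by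
      intro l; rw [hcast]; exact hk1
    have e2 : Module.finrank F (Cs (Fin.last M)) = w * r - s - t := by
      rw [hlast]; exact hkN
    simp only [e1, e2]
    simp only [Finset.sum_const, Finset.card_univ, Fintype.card_fin, smul_eq_mul, add_mul, one_mul]
    omega
  · have hdet := nsc_det hA
    have j0 : Fin (M+1) := 0
    refine ⟨mpMap A (fun l => A⁻¹ j0 l • x), ⟨_, fun l _ => hCsN l ((CN.smul_mem _ hxC)), rfl⟩, ?_⟩
    have hv : ∀ j i, mpMap A (fun l => A⁻¹ j0 l • x) (j, i) = if j0 = j then x i else 0 := by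
      intro j i
      have h := congrFun (congrFun (Matrix.nonsing_inv_mul A (isUnit_iff_ne_zero.2 hdet)) j0) j
      rw [Matrix.mul_apply, Matrix.one_apply] at h
      have : mpMap A (fun l => A⁻¹ j0 l • x) (j, i) = (∑ l, A⁻¹ j0 l * A l j) * x i := by
        simp only [mpMap, LinearMap.coe_mk, AddHom.coe_mk, Finset.sum_mul, Pi.smul_apply,
          smul_eq_mul]
        exact Finset.sum_congr rfl fun l _ => by ring
      rw [this, h]; simp
    constructor
    · intro h0
      apply hx0
      funext i
      have := hv j0 i
      rw [h0] at this
      simpa using this.symm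
    · rw [norm_blocks, Finset.sum_eq_single j0]
      · simp only [hv, if_true]; exact hxw
      · intro j _ hj
        rw [hammingNorm_eq_zero]
        funext i
        rw [hv, if_neg hj.symm]; rfl
      · simp
  · intro y hy hy0
    obtain ⟨j, hj⟩ : ∃ j, (fun i => y (j, i)) ≠ 0 := by
      by_contra! h
      exact hy0 (funext fun p => congrFun (h p.1) p.2)
    have hyj := hd1 _ (hblk y hy j) hj
    rw [norm_blocks]
    by_cases hex : ∃ j', j' ≠ j ∧ (fun i => y (j', i)) ≠ 0
    · obtain ⟨j', hne, hj'⟩ := hex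
      have hyj' := hd1 _ (hblk y hy j') hj'
      have := Finset.add_le_sum (f := fun j => hammingNorm (fun i => y (j, i)))
        (s := Finset.univ) (fun _ _ => Nat.zero_le _) (Finset.mem_univ j') (Finset.mem_univ j) hne
      omega
    · push Not at hex
      have hmem : (fun i => y (j, i)) ∈ CN := by
        obtain ⟨c, hc, rfl⟩ := hy
        have hcN : c (Fin.last M) ∈ CN := hlast ▸ hc (Fin.last M) trivial
        have : (fun i => mpMap A c (j, i)) =
            (A.det / A.adjugate j (Fin.last M)) • c (Fin.last M) := by
          funext i
          have h := mp_adj A c (Fin.last M) i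
          rw [Finset.sum_eq_single j] at h
          · have hb := nsc_adj hA j
            simp only [Pi.smul_apply, smul_eq_mul]
            field_simp
            exact h
          · intro j' _ hne
            have := congrFun (hex j' hne) i
            simp only [Pi.zero_apply] at this
            rw [this, zero_mul]
          · simp
        rw [this]
        exact CN.smul_mem _ hcN
      exact (hdN _ hmem hj).trans (Finset.single_le_sum
        (f := fun j => hammingNorm (fun i => y (j, i))) (fun _ _ => Nat.zero_le _)
        (Finset.mem_univ j))
  · have e : (M + 1) * (w * r - s) - t = ((M + 1) * w) * r - ((M + 1) * s + t) := by
      rw [Nat.mul_sub, mul_assoc]; omega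
    have hle : (M + 1) * s + t ≤ (M + 1) * w * r :=
      hcond.le.trans (Nat.le_mul_of_pos_left r (by positivity))
    unfold optBound at ho1 ⊢
    rw [ceil_aux w r s hw hs] at ho1
    rw [e, ceil_aux _ _ _ (by positivity) hcond]
    simp only [Fintype.card_prod, Fintype.card_fin] at ho1 ⊢
    push_cast [Nat.cast_sub hle, Nat.cast_sub (hs.le.trans hwr)] at ho1 ⊢
    linear_combination ((M : ℤ) + 1) * ho1

end LRCPaper
end

section
/- Let q be a prime power and let r, δ be positive integers with δ > 1 and m := r + δ - 1 ≤ q. Then any δ-1 columns of the 2(δ-1)×(2m-1) matrix Ĥ are linearly independent over F_q. -/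
namespace LRCPaper

theorem vandermonde_aux {F : Type} [Field F] {ι : Type} [DecidableEq ι] (S : Finset ι) (d : ℕ)
    (hS : S.card ≤ d) (a c : ι → F) (ha : Set.InjOn a S)
    (h : ∀ i < d, ∑ j ∈ S, c j * a j ^ i = 0) : ∀ j ∈ S, c j = 0 := by
  have key : ∀ p : Polynomial F, p.natDegree < d → ∑ j ∈ S, c j * p.eval (a j) = 0 := by
    intro p hp
    simp_rw [Polynomial.eval_eq_sum_range' hp, Finset.mul_sum]
    rw [Finset.sum_comm]
    refine Finset.sum_eq_zero fun i hi => ?_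
    have := h i (Finset.mem_range.1 hi)
    calc _ = p.coeff i * ∑ j ∈ S, c j * a j ^ i := by
            rw [Finset.mul_sum]; exact Finset.sum_congr rfl fun _ _ => by ring
      _ = 0 := by rw [this, mul_zero]
  intro j hj
  have hc := Finset.card_erase_lt_of_mem hj
  have := key (∏ k ∈ S.erase j, (Polynomial.X - Polynomial.C (a k)))
    (by rw [Polynomial.natDegree_finsetProd_X_sub_C_eq_card]; omega)
  rw [Finset.sum_eq_single_of_mem j hj] at this
  · rcases mul_eq_zero.1 this with h0 | h0
    · exact h0
    · rw [Polynomial.eval_prod, Finset.prod_eq_zero_iff] at h0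
      obtain ⟨k, hk, hk0⟩ := h0
      simp only [Polynomial.eval_sub, Polynomial.eval_X, Polynomial.eval_C, sub_eq_zero] at hk0
      exact absurd (ha hj (Finset.mem_of_mem_erase hk) hk0).symm (Finset.ne_of_mem_erase hk)
  · intro k hk hkj
    rw [Polynomial.eval_prod, Finset.prod_eq_zero (Finset.mem_erase.2 ⟨hkj, hk⟩) (by simp),
      mul_zero]

/-- any `δ - 1` columns of the `2(δ-1) × (2m-1)` matrix `Ĥ` are
linearly independent over `F_q`, where `m = r + δ - 1 ≤ q`. -/
theorem hat_columns_linearIndependent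
    (q : ℕ) (hq : IsPrimePow q)
    (F : Type) [Field F] [Fintype F] [DecidableEq F] (hF : Fintype.card F = q)
    (r δ : ℕ) (hr : 0 < r) (hδ : 1 < δ) (hmq : r + δ - 1 ≤ q)
    (α lam : ℕ → F)
    (hα : ∀ i j : ℕ, i < r + δ - 1 → j < r + δ - 1 → α i = α j → i = j)
    (hlam : ∀ i : ℕ, i < r + δ - 1 → lam i ≠ 0)
    (T : Finset (Fin (2 * (r + δ - 1) - 1))) (hT : T.card = δ - 1) :
    LinearIndependent F
      (fun j : T => fun i : Fin (2 * (δ - 1)) =>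
        hatEntry δ (r + δ - 1) α lam (i : ℕ) (j.1 : ℕ)) := by
  rw [Fintype.linearIndependent_iff]
  intro g hg j
  have hcard : ∀ P : T → Prop, ∀ [DecidablePred P],
      (Finset.univ.filter P).card ≤ δ - 1 := by
    intro P _
    refine (Finset.card_le_univ _).trans ?_
    simp [hT]
  have hrow : ∀ i < 2 * (δ - 1),
      ∑ j : T, g j * hatEntry δ (r + δ - 1) α lam i (j.1 : ℕ) = 0 := by
    intro i hi
    have := congrFun hg ⟨i, hi⟩
    simpa [Finset.sum_apply] using this
  by_cases hj : (j.1 : ℕ) < r + δ - 1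
  · have := vandermonde_aux (Finset.univ.filter fun k : T => (k.1 : ℕ) < r + δ - 1) (δ - 1)
      (hcard _) (fun k => α k.1) (fun k => g k * lam k.1) (by
        intro x hx y hy hxy
        simp only [Finset.coe_filter, Finset.mem_univ, true_and, Set.mem_ofPred_eq] at hx hy
        exact Subtype.ext (Fin.ext (hα _ _ hx hy hxy))) (by
        intro i hi
        rw [Finset.sum_filter]
        refine Eq.trans ?_ (hrow i (by omega))
        refine Finset.sum_congr rfl fun k _ => ?_
        simp only [hatEntry, if_pos hi]
        split_ifs <;> ring) j (by simp [hj])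
    exact (mul_eq_zero.1 this).resolve_right (hlam _ hj)
  · have := vandermonde_aux (Finset.univ.filter fun k : T => r + δ - 1 - 1 ≤ (k.1 : ℕ)) (δ - 1)
      (hcard _) (fun k => α (2 * (r + δ - 1) - 2 - k.1))
      (fun k => g k * lam (2 * (r + δ - 1) - 2 - k.1)) (by
        intro x hx y hy hxy
        simp only [Finset.coe_filter, Finset.mem_univ, true_and, Set.mem_ofPred_eq] at hx hy
        have h1 := x.1.2
        have h2 := y.1.2
        have := hα _ _ (by omega) (by omega) hxy
        exact Subtype.ext (Fin.ext (by omega))) (by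
        intro i hi
        rw [Finset.sum_filter]
        refine Eq.trans ?_ (hrow (i + (δ - 1)) (by omega))
        refine Finset.sum_congr rfl fun k _ => ?_
        have hi' : ¬ (i + (δ - 1) < δ - 1) := by omega
        simp only [hatEntry, if_neg hi', Nat.add_sub_cancel]
        split_ifs <;> ring) j (by simp; omega)
    exact (mul_eq_zero.1 this).resolve_right (hlam _ (by omega))

end LRCPaper
end

section
/- Let q be a prime power and let r, δ, τ, v be positive integers with δ > 1, v > 1, m := r + δ - 1 ≤ q, τ + 1 < r, and τ ≤ δ. Then the (v(δ-1)+τ) × (vm-1) matrix H̃ has rank v(δ-1)+τ over F_q. -/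
namespace LRCPaper

open Polynomial in
/-- Row monomial seen from block `b`. -/
noncomputable def rowMon {F : Type} [Field F] (e v b i : ℕ) : Polynomial F :=
  if i < v * e then (if i / e = b then X ^ (i % e) else 0) else X ^ (e + (i - v * e))

/-- Column of block `b`, evaluation index `k`. -/
def colIdx (m v b k : ℕ) : ℕ := if b + 1 < v then b * m + k else (v - 2) * m + (2 * m - 2 - k)

theorem colIdx_lt (m w b k : ℕ) (hb : b < w + 2) (hk : k + 1 < m) :
    colIdx m (w + 2) b k < (w + 2) * m - 1 := by
  unfold colIdx
  have e2 : (w + 2) * m = w * m + 2 * m := by ring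
  split_ifs with h
  · have : b * m ≤ w * m := Nat.mul_le_mul_right _ (by omega)
    omega
  · have : w + 2 - 2 = w := by omega
    rw [this]
    omega

theorem entry_eq {F : Type} [Field F] [Fintype F] [DecidableEq F]
    (δ m w b k i : ℕ) (hδ : 1 < δ) (α lam : ℕ → F) (hb : b < w + 2) (hk : k + 1 < m) :
    tildeHEntry δ m (w + 2) α lam i (colIdx m (w + 2) b k)
      = lam k * (rowMon (F := F) (δ - 1) (w + 2) b i).eval (α k) := by
  obtain ⟨e, rfl⟩ : ∃ e, δ = e + 1 := ⟨δ - 1, by omega⟩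
  have he : 0 < e := by omega
  have hm : 0 < m := by omega
  have hw : w + 2 - 2 = w := by omega
  have e2 : (w + 2) * e = w * e + 2 * e := by ring
  have hdm := Nat.div_add_mod i e
  have hml := Nat.mod_lt i he
  unfold tildeHEntry calHEntry hatEntry rowMon colIdx
  simp only [hw, Nat.add_sub_cancel]
  -- facts about the quotient of `i`
  have q0 : i < w * e ↔ i / e < w := (Nat.div_lt_iff_lt_mul he).symm
  have q1 : i < (w + 1) * e ↔ i / e < w + 1 := (Nat.div_lt_iff_lt_mul he).symm
  have q2 : i < (w + 2) * e ↔ i / e < w + 2 := (Nat.div_lt_iff_lt_mul he).symm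
  have e1 : (w + 1) * e = w * e + e := by ring
  have r0 : i / e = w → i - w * e = i % e := by
    intro h; rw [h] at hdm; rw [Nat.mul_comm] at hdm; omega
  have r1 : i / e = w + 1 → i - w * e - e = i % e := by
    intro h; rw [h] at hdm; rw [Nat.mul_comm, e1] at hdm; omega
  have key : (i - w * e < e) ↔ i < (w + 1) * e := by omega
  rcases lt_trichotomy b w with hbw | hbw | hbw
  · have c1 : b * m + k < w * m := by
      have : (b + 1) * m ≤ w * m := Nat.mul_le_mul_right _ (by omega)
      have e3 : (b + 1) * m = b * m + m := by ring
      omega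
    have c2 : (b * m + k) / m = b := by
      rw [Nat.mul_comm, Nat.mul_add_div hm, Nat.div_eq_of_lt (by omega)]; rfl
    have c3 : (b * m + k) % m = k := by
      rw [Nat.mul_comm, Nat.mul_add_mod, Nat.mod_eq_of_lt (by omega)]
    have c4 : b + 1 < w + 2 := by omega
    have c5 : ¬ w * m ≤ b * m + k := by omega
    simp only [c1, c2, c3, c4, c5, if_true, if_false, true_and, q0, q2]
    by_cases h2 : i / e < w + 2
    · by_cases h3 : b = i / e
      · subst h3; simp [h2, hbw]
      · simp [h2, h3, Ne.symm h3]
    · simp [h2]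
  · subst hbw
    have c1 : ¬ b * m + k < b * m := by omega
    have c4 : b + 1 < b + 2 := by omega
    have c5 : b * m ≤ b * m + k := by omega
    have c6 : b * m + k - b * m = k := by omega
    have c7 : k < m := by omega
    have c8 : ¬ m - 1 ≤ k := by omega
    simp only [c1, c4, c5, c6, c7, c8, if_true, if_false, false_and, key, q0, q1, q2]
    by_cases h2 : i / e < b + 2
    · by_cases h3 : i / e = b
      · simp [h3, r0 h3]
      · by_cases h4 : i / e < b
        · simp [h2, h3, h4]
        · have : ¬ i / e < b + 1 := by omega
          simp only [h2, h3, h4, this]; simp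
    · simp [h2]
  · obtain rfl : b = w + 1 := by omega
    have c1 : ¬ w * m + (2 * m - 2 - k) < w * m := by omega
    have c4 : ¬ w + 1 + 1 < w + 2 := by omega
    have c5 : w * m ≤ w * m + (2 * m - 2 - k) := by omega
    have c6 : w * m + (2 * m - 2 - k) - w * m = 2 * m - 2 - k := by omega
    have c7 : ¬ 2 * m - 2 - k < m := by omega
    have c8 : m - 1 ≤ 2 * m - 2 - k := by omega
    have c9 : 2 * m - 2 - (2 * m - 2 - k) = k := by omega
    simp only [c1, c4, c5, c6, c7, c8, c9, if_true, if_false, false_and, key, q0, q1, q2]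
    by_cases h2 : i / e < w + 2
    · by_cases h3 : i / e = w + 1
      · simp [h3, r1 h3]
      · by_cases h4 : i / e < w
        · simp [h2, h3, h4]
        · have : i / e < w + 1 := by omega
          simp only [h2, h3, h4, this]; simp
    · simp [h2]

theorem rowMon_natDegree {F : Type} [Field F] (e v b i τ : ℕ) (he : 0 < e) (hτ : 0 < τ)
    (hi : i < v * e + τ) : (rowMon (F := F) e v b i).natDegree < e + τ := by
  unfold rowMon
  have := Nat.mod_lt i he
  split_ifs
  · rw [Polynomial.natDegree_X_pow]; omega
  · simp; omega
  · rw [Polynomial.natDegree_X_pow]; omega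

/-- the `(v(δ-1)+τ) × (vm-1)` matrix `H̃` has rank `v(δ-1) + τ`
over `F_q`, where `m = r + δ - 1 ≤ q`, `v > 1`, `τ + 1 < r` and `τ ≤ δ`. -/
theorem tildeH_rank
    (q : ℕ) (hq : IsPrimePow q)
    (F : Type) [Field F] [Fintype F] [DecidableEq F] (hF : Fintype.card F = q)
    (r δ τ v : ℕ) (hr : 0 < r) (hδ : 1 < δ) (hτ : 0 < τ) (hv : 1 < v)
    (hmq : r + δ - 1 ≤ q) (hτr : τ + 1 < r) (hτδ : τ ≤ δ)
    (α lam : ℕ → F)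
    (hα : ∀ i j : ℕ, i < r + δ - 1 → j < r + δ - 1 → α i = α j → i = j)
    (hlam : ∀ i : ℕ, i < r + δ - 1 → lam i ≠ 0) :
    Matrix.rank
        (Matrix.of fun (i : Fin (v * (δ - 1) + τ)) (j : Fin (v * (r + δ - 1) - 1)) =>
          tildeHEntry δ (r + δ - 1) v α lam (i : ℕ) (j : ℕ))
      = v * (δ - 1) + τ := by
  obtain ⟨w, rfl⟩ : ∃ w, v = w + 2 := ⟨v - 2, by omega⟩
  have he : 0 < δ - 1 := by omega
  set e := δ - 1 with hedef
  have hli : LinearIndependent F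
      (Matrix.of fun (i : Fin ((w + 2) * e + τ)) (j : Fin ((w + 2) * (r + δ - 1) - 1)) =>
          tildeHEntry δ (r + δ - 1) (w + 2) α lam (i : ℕ) (j : ℕ)).row := by
    rw [Fintype.linearIndependent_iff]
    intro c hc
    have hP : ∀ b < w + 2,
        (∑ i : Fin ((w + 2) * e + τ), Polynomial.C (c i) * rowMon e (w + 2) b i) = 0 := by
      intro b hb
      set P : Polynomial F :=
        ∑ i : Fin ((w + 2) * e + τ), Polynomial.C (c i) * rowMon e (w + 2) b i with hPdef
      have hdeg : P.natDegree < e + τ := by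
        refine lt_of_le_of_lt (Polynomial.natDegree_sum_le_of_forall_le (n := e + τ - 1) _ _ ?_)
          (by omega)
        intro i _
        have h1 := rowMon_natDegree (F := F) e (w + 2) b i τ he hτ i.2
        have h2 := Polynomial.natDegree_C_mul_le (c i) (rowMon (F := F) e (w + 2) b i)
        omega
      have hinj : Function.Injective (fun k : Fin (r + δ - 2) => α k) := by
        intro x y hxy
        exact Fin.ext (hα x y (by omega) (by omega) hxy)
      refine Polynomial.eq_zero_of_natDegree_lt_card_of_eval_eq_zero P hinj ?_ ?_
      · intro k
        have hk : (k : ℕ) + 1 < r + δ - 1 := by omega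
        have h := congrFun hc ⟨_, colIdx_lt (r + δ - 1) w b k hb hk⟩
        simp only [Finset.sum_apply, Pi.smul_apply, Matrix.row, Matrix.of_apply, smul_eq_mul,
          Pi.zero_apply] at h
        simp only [entry_eq δ (r + δ - 1) w b k _ hδ α lam hb hk] at h
        have hl := hlam k (by omega)
        rw [hPdef, Polynomial.eval_finset_sum]
        have h' : lam k * ∑ i : Fin ((w + 2) * e + τ),
            Polynomial.eval (α k) (Polynomial.C (c i) * rowMon e (w + 2) b i) = 0 := by
          rw [← h, Finset.mul_sum]
          refine Finset.sum_congr rfl fun i _ => ?_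
          rw [Polynomial.eval_mul, Polynomial.eval_C]
          ring
        exact (mul_eq_zero.mp h').resolve_left hl
      · rw [Fintype.card_fin]; omega
    intro i
    by_cases hi : (i : ℕ) < (w + 2) * e
    · have h := congrArg (fun p => Polynomial.coeff p ((i : ℕ) % e))
        (hP (i / e) ((Nat.div_lt_iff_lt_mul he).mpr hi))
      simp only [Polynomial.finset_sum_coeff, Polynomial.coeff_C_mul, Polynomial.coeff_zero] at h
      rw [Finset.sum_eq_single i] at h
      · simpa [rowMon, hi] using h
      · intro j _ hji
        have hml := Nat.mod_lt (i : ℕ) he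
        unfold rowMon
        split_ifs with h1 h2
        · rw [Polynomial.coeff_X_pow, if_neg, mul_zero]
          intro h3
          apply hji
          apply Fin.ext
          rw [← Nat.div_add_mod (j : ℕ) e, ← Nat.div_add_mod (i : ℕ) e, h2, h3]
        · simp
        · rw [Polynomial.coeff_X_pow, if_neg (by omega), mul_zero]
      · simp
    · have h := congrArg (fun p => Polynomial.coeff p (e + ((i : ℕ) - (w + 2) * e)))
        (hP 0 (by omega))
      simp only [Polynomial.finset_sum_coeff, Polynomial.coeff_C_mul, Polynomial.coeff_zero] at h
      rw [Finset.sum_eq_single i] at h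
      · simpa [rowMon, hi] using h
      · intro j _ hji
        have hml := Nat.mod_lt (j : ℕ) he
        unfold rowMon
        split_ifs with h1 h2
        · rw [Polynomial.coeff_X_pow, if_neg (by omega), mul_zero]
        · simp
        · rw [Polynomial.coeff_X_pow, if_neg, mul_zero]
          intro h3
          apply hji
          apply Fin.ext
          omega
      · simp
  have := hli.rank_matrix
  rwa [Fintype.card_fin] at this

end LRCPaper
end

section
/- Let M and N be integers with 1 < M ≤ N and let q be a prime power. There exists an M×N nonsingular-by-columns (NSC) matrix over F_q if and only if N ≤ q. -/
namespace LRCPaper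

/-- for `1 < M ≤ N`, there exists an `M × N` NSC matrix over `F_q`
if and only if `N ≤ q`. -/
theorem exists_nsc_iff
    (q : ℕ) (hq : IsPrimePow q)
    (F : Type) [Field F] [Fintype F] [DecidableEq F] (hF : Fintype.card F = q)
    (M N : ℕ) (hM : 1 < M) (hMN : M ≤ N) :
    (∃ A : Matrix (Fin M) (Fin N) F, IsNSC A) ↔ N ≤ q := by
  constructor
  · rintro ⟨A, hA⟩
    have h1 : ∀ j, A ⟨0, by omega⟩ j ≠ 0 := by
      intro j
      have h := hA 1 (by omega) (fun _ => j) (Subsingleton.strictMono _)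
      rw [Matrix.det_fin_one] at h
      exact h
    have h2 : ∀ j k, j < k → A ⟨0, by omega⟩ j * A ⟨1, hM⟩ k - A ⟨0, by omega⟩ k * A ⟨1, hM⟩ j ≠ 0 := by
      intro j k hjk
      have h := hA 2 (by omega) ![j, k] (by
        intro a b hab
        fin_cases a <;> fin_cases b <;> simp_all)
      rw [Matrix.det_fin_two] at h
      exact h
    have hinj : Function.Injective (fun j => A ⟨1, hM⟩ j / A ⟨0, by omega⟩ j) := by
      intro j k hjk
      have h3 := (div_eq_div_iff (h1 j) (h1 k)).1 hjk
      rcases lt_trichotomy j k with h | h | h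
      · exact absurd (by linear_combination - h3) (h2 j k h)
      · exact h
      · exact absurd (by linear_combination h3) (h2 k j h)
    have := Fintype.card_le_of_injective _ hinj
    simpa [hF] using this
  · intro hN
    obtain ⟨e⟩ : Nonempty (Fin N ↪ F) :=
      Function.Embedding.nonempty_of_card_le (by simpa [hF] using hN)
    refine ⟨Matrix.of fun a j => e j ^ (a : ℕ), ?_⟩
    intro i hi f hf
    have h := (Matrix.det_vandermonde_ne_zero_iff (v := fun b => e (f b))).2
      (e.injective.comp hf.injective)
    rw [← Matrix.det_transpose] at h
    exact h

end LRCPaper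
end
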